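/- Let n ≥ 1, p ≥ 2, 0 < σ < 1, α > 0 with σp + α ≤ 1, and suppose u : ℝⁿ → ℝ is Hölder continuous of order σp + α with constant M on the ball B_ε(x), for ε ∈ (0,1). Then |∫_{B_ε(x)} |u(x) - u(y)|^{p-2} (u(x) - u(y)) |x - y|^{-(n+σp)} dy| ≤ C(p, n, σ, α, M) ε^{(σp+α)(p-2) + α}. -/

import Mathlib

open MeasureTheory

/-!
Since `‖‖v‖ ^ (p - 2) • v‖ = ‖v‖ ^ (p - 1)` for `v ≠ 0`, a Hölder bound of order `β` at `x`
dominates the integrand by `M ^ (p - 1) * ‖x - y‖ ^ (γ - d)`, where `γ = β * (p - 1) - s`, `d` is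
the dimension and `d + s` is the order of the kernel. As `γ > 0`, this power of the distance is
integrable near `x`, and in polar coordinates its integral over the ball of radius `ε` is a constant
times `ε ^ γ`. For `s = σ * p` and `β = σ * p + α` one gets `γ = (σ * p + α) * (p - 2) + α`.
-/

section

open Metric Module Set

section Pointwise

variable {F : Type*} [NormedAddCommGroup F] [NormedSpace ℝ F]

lemma norm_rpow_sub_two_smul_self_le (p : ℝ) (v : F) : ‖‖v‖ ^ (p - 2) • v‖ ≤ ‖v‖ ^ (p - 1) := by
  rcases eq_or_ne v 0 with rfl | hv
  · rw [smul_zero, norm_zero]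
    positivity
  · have h_exp : p - 2 + 1 = p - 1 := by ring
    rw [norm_smul, Real.norm_of_nonneg (by positivity),
      ← Real.rpow_add_one (norm_ne_zero_iff.2 hv), h_exp]

lemma norm_rpow_smul_rpow_sub_two_smul_self_le {p β M t : ℝ} (hp : 1 ≤ p) (hM : 0 ≤ M)
    (ht : 0 < t) {v : F} (hv : ‖v‖ ≤ M * t ^ β) (q : ℝ) :
    ‖t ^ q • ‖v‖ ^ (p - 2) • v‖ ≤ M ^ (p - 1) * t ^ (β * (p - 1) + q) :=
  calc ‖t ^ q • ‖v‖ ^ (p - 2) • v‖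
      = t ^ q * ‖‖v‖ ^ (p - 2) • v‖ := by rw [norm_smul, Real.norm_of_nonneg (by positivity)]
    _ ≤ t ^ q * (M * t ^ β) ^ (p - 1) := by
        gcongr
        exact (norm_rpow_sub_two_smul_self_le p v).trans
          (Real.rpow_le_rpow (norm_nonneg v) hv (sub_nonneg.2 hp))
    _ = M ^ (p - 1) * t ^ (β * (p - 1) + q) := by
        rw [Real.mul_rpow hM (by positivity), ← Real.rpow_mul ht.le, Real.rpow_add ht]
        ring

end Pointwise

lemma setIntegral_ball_comp_sub_left {E F : Type*} [SeminormedAddCommGroup E] [MeasurableSpace E]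
    [BorelSpace E] [NormedAddCommGroup F] [NormedSpace ℝ F] (μ : Measure E)
    [μ.IsAddLeftInvariant] [μ.IsNegInvariant] (g : E → F) (x : E) (r : ℝ) :
    ∫ y in ball x r, g (x - y) ∂μ = ∫ z in ball 0 r, g z ∂μ := by
  have h_preimage : (x - ·) ⁻¹' ball (0 : E) r = ball x r := by
    ext y
    rw [mem_preimage, mem_ball_zero_iff, mem_ball', dist_eq_norm]
  rw [← h_preimage]
  exact (Measure.measurePreserving_sub_left μ x).setIntegral_preimage_emb
    (measurableEmbedding_subLeft x) g _

variable {E F : Type*} [NormedAddCommGroup E] [NormedSpace ℝ E] [FiniteDimensional ℝ E]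
  [Nontrivial E] [MeasurableSpace E] [BorelSpace E] [NormedAddCommGroup F] [NormedSpace ℝ F]
  (μ : Measure E) [μ.IsAddHaarMeasure]

lemma setIntegral_ball_zero_fun_norm (f : ℝ → F) (r : ℝ) :
    ∫ y in ball (0 : E) r, f ‖y‖ ∂μ =
      finrank ℝ E • μ.real (ball 0 1) • ∫ t in Ioo 0 r, t ^ (finrank ℝ E - 1) • f t := by
  have h_ball : (ball (0 : E) r).indicator (fun y ↦ f ‖y‖) = fun y ↦ (Iio r).indicator f ‖y‖ := by
    ext y
    simp [indicator]
  have h_smul : (fun t : ℝ ↦ t ^ (finrank ℝ E - 1) • (Iio r).indicator f t) =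
      (Iio r).indicator fun t ↦ t ^ (finrank ℝ E - 1) • f t :=
    (indicator_smul (Iio r) (fun t : ℝ ↦ t ^ (finrank ℝ E - 1)) f).symm
  rw [← integral_indicator measurableSet_ball, h_ball, integral_fun_norm_addHaar, h_smul,
    setIntegral_indicator measurableSet_Iio, Ioi_inter_Iio]

lemma integrableOn_ball_zero_norm_rpow {γ : ℝ} (hγ : 0 < γ) (r : ℝ) :
    IntegrableOn (fun y : E ↦ ‖y‖ ^ (γ - finrank ℝ E)) (ball 0 r) μ := by
  have h_meas : Measurable fun y : E ↦ ‖y‖ ^ (γ - finrank ℝ E) := by fun_prop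
  refine integrableOn_ball_of_norm_le_rpow (C := 1) (α := finrank ℝ E - γ) finrank_pos
    (sub_lt_self _ hγ) (.of_forall fun y ↦ ?_) h_meas.aestronglyMeasurable
  rw [neg_sub, one_mul, Real.norm_of_nonneg (by positivity)]

lemma setIntegral_ball_zero_norm_rpow {γ r : ℝ} (hγ : 0 < γ) (hr : 0 ≤ r) :
    ∫ y in ball (0 : E) r, ‖y‖ ^ (γ - finrank ℝ E) ∂μ =
      finrank ℝ E * μ.real (ball 0 1) / γ * r ^ γ := by
  have h_radial : EqOn (fun t : ℝ ↦ t ^ (finrank ℝ E - 1) • t ^ (γ - finrank ℝ E))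
      (fun t ↦ t ^ (γ - 1)) (Ioo 0 r) := by
    rintro t ⟨ht, -⟩
    simp only [smul_eq_mul]
    rw [← Real.rpow_natCast, ← Real.rpow_add ht, Nat.cast_pred finrank_pos]
    ring_nf
  have h_power : ∫ t in Ioo 0 r, t ^ (γ - 1) = r ^ γ / γ := by
    rw [← integral_Ioc_eq_integral_Ioo, ← intervalIntegral.integral_of_le hr,
      integral_rpow (Or.inl (by linarith)), sub_add_cancel, Real.zero_rpow hγ.ne', sub_zero]
  rw [setIntegral_ball_zero_fun_norm μ (fun t ↦ t ^ (γ - finrank ℝ E)),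
    setIntegral_congr_fun measurableSet_Ioo h_radial, h_power, nsmul_eq_mul, smul_eq_mul]
  ring

lemma norm_setIntegral_ball_zero_rpow_sub_two_smul_le {p s β M r : ℝ} (hp : 1 ≤ p)
    (hs : s < β * (p - 1)) (hM : 0 ≤ M) (hr : 0 ≤ r) {f : E → F}
    (hf : ∀ z ∈ ball 0 r, ‖f z‖ ≤ M * ‖z‖ ^ β) :
    ‖∫ z in ball 0 r, ‖z‖ ^ (-(finrank ℝ E + s)) • ‖f z‖ ^ (p - 2) • f z ∂μ‖ ≤
      M ^ (p - 1) * (finrank ℝ E * μ.real (ball 0 1) / (β * (p - 1) - s)) *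
        r ^ (β * (p - 1) - s) := by
  have hγ : 0 < β * (p - 1) - s := sub_pos.2 hs
  have h_bound : ∀ᵐ z ∂μ.restrict (ball 0 r),
      ‖‖z‖ ^ (-(finrank ℝ E + s)) • ‖f z‖ ^ (p - 2) • f z‖ ≤
        M ^ (p - 1) * ‖z‖ ^ (β * (p - 1) - s - finrank ℝ E) := by
    filter_upwards [ae_restrict_mem measurableSet_ball, Measure.ae_ne _ 0] with z hz hz0
    convert norm_rpow_smul_rpow_sub_two_smul_self_le hp hM (norm_pos_iff.2 hz0) (hf z hz)
      (-(finrank ℝ E + s)) using 3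
    ring
  refine (norm_integral_le_of_norm_le
    ((integrableOn_ball_zero_norm_rpow μ hγ r).const_mul _) h_bound).trans_eq ?_
  rw [integral_const_mul, setIntegral_ball_zero_norm_rpow μ hγ hr, mul_assoc]

theorem stmt11_general {p s β M : ℝ} (hp : 1 ≤ p) (hs : s < β * (p - 1)) (hM : 0 < M) :
    ∃ C : ℝ, 0 < C ∧ ∀ ε : ℝ, 0 < ε → ∀ x : E, ∀ u : E → F,
      (∀ y ∈ ball x ε, ‖u x - u y‖ ≤ M * ‖x - y‖ ^ β) →
      ‖∫ y in ball x ε,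
          ‖x - y‖ ^ (-(finrank ℝ E + s)) • ‖u x - u y‖ ^ (p - 2) • (u x - u y) ∂μ‖ ≤
        C * ε ^ (β * (p - 1) - s) := by
  have h_dim : 0 < finrank ℝ E := finrank_pos
  have h_vol : 0 < μ.real (ball (0 : E) 1) :=
    ENNReal.toReal_pos (measure_ball_pos μ 0 one_pos).ne' measure_ball_lt_top.ne
  refine ⟨M ^ (p - 1) * (finrank ℝ E * μ.real (ball 0 1) / (β * (p - 1) - s)),
    mul_pos (by positivity) (div_pos (by positivity) (sub_pos.2 hs)), fun ε hε x u hu ↦ ?_⟩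
  have hf : ∀ z ∈ ball 0 ε, ‖u x - u (x - z)‖ ≤ M * ‖z‖ ^ β := fun z hz ↦ by
    simpa only [sub_sub_cancel] using hu (x - z) (by simpa using hz)
  have h_zero := norm_setIntegral_ball_zero_rpow_sub_two_smul_le μ hp hs hM.le hε.le hf
  rw [← setIntegral_ball_comp_sub_left μ _ x ε] at h_zero
  simpa only [sub_sub_cancel] using h_zero

end

/-- For `n ≥ 1`, `p ≥ 2`, `0 < σ < 1`, `α > 0` with `σp + α ≤ 1` and `M > 0`, there is a
constant `C = C(p,n,σ,α,M)` such that for every `ε ∈ (0,1)`, `x ∈ ℝⁿ` and every `u` that is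
Hölder of order `σp + α` with constant `M` on `B_ε(x)`,
`|∫_{B_ε(x)} |u(x)-u(y)|^{p-2}(u(x)-u(y)) |x-y|^{-(n+σp)} dy| ≤ C ε^{(σp+α)(p-2)+α}`. -/
theorem stmt11 (n : ℕ) (hn : 1 ≤ n) (σ p α M : ℝ) (hσ0 : 0 < σ) (hσ1 : σ < 1) (hp : 2 ≤ p)
    (hα : 0 < α) (hle : σ * p + α ≤ 1) (hM : 0 < M) :
    ∃ C : ℝ, 0 < C ∧ ∀ ε : ℝ, 0 < ε → ε < 1 →
      ∀ x : EuclideanSpace ℝ (Fin n), ∀ u : EuclideanSpace ℝ (Fin n) → ℝ,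
      (∀ y ∈ Metric.ball x ε, |u x - u y| ≤ M * ‖x - y‖ ^ (σ * p + α)) →
      |∫ y in Metric.ball x ε,
          |u x - u y| ^ (p - 2) * (u x - u y) * ‖x - y‖ ^ (-((n : ℝ) + σ * p))| ≤
        C * ε ^ ((σ * p + α) * (p - 2) + α) := by
  have : Nonempty (Fin n) := Fin.pos_iff_nonempty.1 hn
  have hs : σ * p < (σ * p + α) * (p - 1) := by nlinarith [mul_pos hσ0 (by linarith : 0 < p)]
  have h_exp : (σ * p + α) * (p - 1) - σ * p = (σ * p + α) * (p - 2) + α := by ring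
  obtain ⟨C, hC, h⟩ := stmt11_general (F := ℝ)
    (volume : Measure (EuclideanSpace ℝ (Fin n))) (one_le_two.trans hp) hs hM
  exact ⟨C, hC, fun ε hε _ x u hu ↦ by simpa [h_exp, mul_comm] using h ε hε x u hu⟩
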